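/- Let a > 0 and b ∈ ℝ, and for n large define r_n > 0 by r_n^d = (a log n + b)/(α n). If g(r) = o(r^{-c}) as r → ∞ for some c > d, then n·r_n^d·∫_{ℝ^d \ r_n^{-1}S} g(|z|) dz → 0 as n → ∞, where r_n^{-1}S = {r_n^{-1}x : x ∈ S}. -/

import Mathlib

/-! If `f = O(‖x‖ ^ (-c))` at infinity in dimension `d < c`, the change of variables `x ↦ R • x`
shows that the integral of `f` outside `R • S`, for a neighbourhood `S` of the origin, is
`O(R ^ (d - c))`. Taking `R = 1 / r n`, it remains to see that `u n * r n ^ (c - d) → 0` for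
`u n = n * r n ^ d`. Since `u n = O(log n)` and `r n = (u n / n) ^ (1 / d)`, this product is
bounded by a power of `log n` divided by a positive power of `n`. -/

open MeasureTheory Filter Set

noncomputable section

namespace RCM

/-- The half-open unit cube `S = (-1/2, 1/2]^d`. -/
def cube (d : ℕ) : Set (EuclideanSpace ℝ (Fin d)) :=
  {x | ∀ i, x i ∈ Set.Ioc (-(1/2) : ℝ) (1/2)}

section General

open Asymptotics Bornology Module
open scoped Pointwise Topology

theorem tendsto_compl_smul_smallSets_cobounded {E : Type*} [SeminormedAddCommGroup E]
    [NormedSpace ℝ E] {S : Set E} (hS : S ∈ 𝓝 0) :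
    Tendsto (fun R : ℝ ↦ (R • S)ᶜ) atTop (cobounded E).smallSets := by
  refine tendsto_smallSets_iff.2 fun t ht ↦ ?_
  have hbounded : IsVonNBounded ℝ tᶜ :=
    NormedSpace.isVonNBounded_of_isBounded ℝ (isBounded_compl_iff.2 ht)
  filter_upwards [IsOrderBornology.atTop_le_cobounded (hbounded hS)] with R hR
  exact compl_subset_comm.1 hR

section Integral

variable {E F : Type*} [NormedAddCommGroup E] [NormedSpace ℝ E] [FiniteDimensional ℝ E]
  [MeasurableSpace E] [BorelSpace E] {μ : Measure E} [μ.IsAddHaarMeasure]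
  [NormedAddCommGroup F] {f : E → F} {c : ℝ} {S : Set E}

theorem integrableAtFilter_cobounded_of_isBigO_norm_rpow (hf : AEStronglyMeasurable f μ)
    (hc : finrank ℝ E < c) (hfc : f =O[cobounded E] fun x ↦ ‖x‖ ^ (-c)) :
    IntegrableAtFilter f (cobounded E) μ := by
  have hc₀ : 0 < c := (Nat.cast_nonneg _).trans_lt hc
  have hnorm : (fun x : E ↦ ‖x‖ ^ (-c)) =O[cobounded E] fun x ↦ (1 + ‖x‖) ^ (-c) := by
    refine .of_bound (2 ^ c) ?_
    filter_upwards [tendsto_norm_cobounded_atTop.eventually_ge_atTop 1] with x hx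
    have hx₀ : 0 < ‖x‖ := one_pos.trans_le hx
    rw [Real.norm_of_nonneg (by positivity), Real.norm_of_nonneg (by positivity)]
    calc
      ‖x‖ ^ (-c) = 2 ^ c * (2 * ‖x‖) ^ (-c) := by
        rw [Real.mul_rpow zero_le_two hx₀.le, ← mul_assoc, ← Real.rpow_add two_pos,
          add_neg_cancel, Real.rpow_zero, one_mul]
      _ ≤ 2 ^ c * (1 + ‖x‖) ^ (-c) := by
        gcongr 2 ^ c * ?_
        exact Real.rpow_le_rpow_of_nonpos (by positivity) (by linarith) (neg_nonpos.2 hc₀.le)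
  have : IsMeasurablyGenerated (cobounded E) := by
    rw [Metric.cobounded_eq_cocompact]
    infer_instance
  exact (hfc.trans hnorm).integrableAtFilter hf.stronglyMeasurableAtFilter
    ((integrable_one_add_norm hc).integrableAtFilter _)

theorem setIntegral_compl_smul_norm_rpow (S : Set E) (c : ℝ) {R : ℝ} (hR : 0 < R) :
    ∫ x in (R • S)ᶜ, ‖x‖ ^ (-c) ∂μ = (∫ x in Sᶜ, ‖x‖ ^ (-c) ∂μ) * R ^ (finrank ℝ E - c) := by
  have hcompl : R • Sᶜ = (R • S)ᶜ := by
    simp only [compl_eq_univ_sdiff, smul_set_sdiff₀ hR.ne', smul_set_univ₀ hR.ne']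
  have hscale : R ^ (-c) * ∫ x in Sᶜ, ‖x‖ ^ (-c) ∂μ =
      (R ^ finrank ℝ E)⁻¹ * ∫ x in (R • S)ᶜ, ‖x‖ ^ (-c) ∂μ := by
    rw [← hcompl, ← smul_eq_mul (R ^ finrank ℝ E)⁻¹,
      ← Measure.setIntegral_comp_smul_of_pos μ _ _ hR, ← integral_const_mul]
    simp only [norm_smul, Real.norm_of_nonneg hR.le, Real.mul_rpow hR.le (norm_nonneg _)]
  rw [sub_eq_add_neg, Real.rpow_add hR, Real.rpow_natCast, mul_left_comm, mul_comm _ (R ^ (-c)),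
    hscale, mul_inv_cancel_left₀ (by positivity)]

theorem eventually_integrableOn_compl_smul (hf : AEStronglyMeasurable f μ)
    (hc : finrank ℝ E < c) (hfc : f =O[cobounded E] fun x ↦ ‖x‖ ^ (-c)) (hS : S ∈ 𝓝 0) :
    ∀ᶠ R : ℝ in atTop, IntegrableOn f (R • S)ᶜ μ :=
  (tendsto_compl_smul_smallSets_cobounded hS).eventually
    (integrableAtFilter_cobounded_of_isBigO_norm_rpow hf hc hfc).eventually

theorem isBigO_setIntegral_compl_smul [NormedSpace ℝ F] (hf : AEStronglyMeasurable f μ)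
    (hc : finrank ℝ E < c) (hfc : f =O[cobounded E] fun x ↦ ‖x‖ ^ (-c)) (hS : S ∈ 𝓝 0) :
    (fun R : ℝ ↦ ∫ x in (R • S)ᶜ, f x ∂μ) =O[atTop] fun R ↦ R ^ (finrank ℝ E - c) := by
  obtain ⟨C, hC⟩ := hfc.bound
  -- `S` may fail to be measurable, so the pointwise bound is integrated outside `R • interior S`.
  have hU : interior S ∈ 𝓝 0 := interior_mem_nhds.2 hS
  have hnorm : AEStronglyMeasurable (fun x : E ↦ ‖x‖ ^ (-c)) μ := by
    have : Measurable fun x : E ↦ ‖x‖ ^ (-c) := by fun_prop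
    exact this.aestronglyMeasurable
  refine .of_bound (C * ∫ x in (interior S)ᶜ, ‖x‖ ^ (-c) ∂μ) ?_
  filter_upwards [eventually_gt_atTop 0, eventually_integrableOn_compl_smul hf hc hfc hU,
    eventually_integrableOn_compl_smul hnorm hc (isBigO_refl _ _) hU,
    (tendsto_compl_smul_smallSets_cobounded hU).eventually (eventually_smallSets_forall.2 hC)]
    with R hR hfU hnormU hbound
  calc
    ‖∫ x in (R • S)ᶜ, f x ∂μ‖ ≤ ∫ x in (R • S)ᶜ, ‖f x‖ ∂μ := norm_integral_le_integral_norm _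
    _ ≤ ∫ x in (R • interior S)ᶜ, ‖f x‖ ∂μ :=
      setIntegral_mono_set hfU.norm (.of_forall fun _ ↦ norm_nonneg _)
        (compl_subset_compl.2 (smul_set_mono interior_subset)).eventuallyLE
    _ ≤ ∫ x in (R • interior S)ᶜ, C * ‖x‖ ^ (-c) ∂μ := by
      refine setIntegral_mono_on hfU.norm (hnormU.const_mul C)
        (isOpen_interior.smul₀ hR.ne').measurableSet.compl fun x hx ↦ ?_
      simpa only [Real.norm_of_nonneg (Real.rpow_nonneg (norm_nonneg x) (-c))] using hbound x hx
    _ = C * (∫ x in (interior S)ᶜ, ‖x‖ ^ (-c) ∂μ) * ‖R ^ (finrank ℝ E - c)‖ := by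
      rw [integral_const_mul, setIntegral_compl_smul_norm_rpow _ _ hR, mul_assoc,
        Real.norm_of_nonneg (by positivity)]

end Integral

section LogarithmicWeight

variable {r : ℕ → ℝ} {k : ℕ}

theorem tendsto_rpow_mul_rpow_of_isBigO_log (hk : k ≠ 0) (hr : ∀ᶠ n in atTop, 0 < r n)
    (hlog : (fun n : ℕ ↦ n * r n ^ k) =O[atTop] fun n : ℕ ↦ Real.log n)
    {t s : ℝ} (ht : 0 ≤ t) (hs : 0 < s) :
    Tendsto (fun n : ℕ ↦ (n * r n ^ k) ^ t * r n ^ s) atTop (𝓝 0) := by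
  have hlog_nonneg : ∀ᶠ n : ℕ in atTop, 0 ≤ Real.log n :=
    .of_forall fun n ↦ Real.log_natCast_nonneg n
  have hpow : (fun n : ℕ ↦ (n * r n ^ k) ^ (t + s / k)) =o[atTop] fun n : ℕ ↦ (n : ℝ) ^ (s / k) :=
    (hlog.rpow (by positivity) hlog_nonneg).trans_isLittleO
      ((isLittleO_log_rpow_rpow_atTop _ (by positivity)).comp_tendsto tendsto_natCast_atTop_atTop)
  refine hpow.tendsto_div_nhds_zero.congr' ?_
  filter_upwards [hr, eventually_gt_atTop 0] with n hrn hn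
  have hn' : (0 : ℝ) < n := Nat.cast_pos.2 hn
  have hroot : (r n ^ k) ^ (s / k) = r n ^ s := by
    rw [← Real.rpow_natCast, ← Real.rpow_mul hrn.le, mul_div_cancel₀ _ (Nat.cast_ne_zero.2 hk)]
  rw [Real.rpow_add (by positivity),
    Real.mul_rpow (y := r n ^ k) (z := s / k) hn'.le (by positivity), hroot]
  field_simp

theorem tendsto_inv_atTop_of_isBigO_log (hk : k ≠ 0) (hr : ∀ᶠ n in atTop, 0 < r n)
    (hlog : (fun n : ℕ ↦ n * r n ^ k) =O[atTop] fun n : ℕ ↦ Real.log n) :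
    Tendsto (fun n ↦ (r n)⁻¹) atTop atTop := by
  have hr₀ : Tendsto r atTop (𝓝 0) := by
    simpa using tendsto_rpow_mul_rpow_of_isBigO_log hk hr hlog le_rfl one_pos
  exact tendsto_inv_nhdsGT_zero.comp (tendsto_nhdsWithin_iff.2 ⟨hr₀, hr⟩)

end LogarithmicWeight

theorem tail_integral_tendsto_zero_general {E F : Type*} [NormedAddCommGroup E] [NormedSpace ℝ E]
    [FiniteDimensional ℝ E] [Nontrivial E] [MeasurableSpace E] [BorelSpace E] {μ : Measure E}
    [μ.IsAddHaarMeasure] [NormedAddCommGroup F] [NormedSpace ℝ F] {f : E → F} {c : ℝ} {S : Set E}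
    {r : ℕ → ℝ} (hf : AEStronglyMeasurable f μ) (hc : finrank ℝ E < c)
    (hfc : f =O[cobounded E] fun x ↦ ‖x‖ ^ (-c)) (hS : S ∈ 𝓝 0) (hr : ∀ᶠ n in atTop, 0 < r n)
    (hlog : (fun n : ℕ ↦ n * r n ^ finrank ℝ E) =O[atTop] fun n : ℕ ↦ Real.log n) :
    (∀ᶠ n in atTop, IntegrableOn f ((r n)⁻¹ • S)ᶜ μ) ∧
      Tendsto (fun n : ℕ ↦ (n * r n ^ finrank ℝ E) • ∫ x in ((r n)⁻¹ • S)ᶜ, f x ∂μ)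
        atTop (𝓝 0) := by
  have hdim : finrank ℝ E ≠ 0 := finrank_pos.ne'
  have hinv := tendsto_inv_atTop_of_isBigO_log hdim hr hlog
  refine ⟨hinv.eventually (eventually_integrableOn_compl_smul hf hc hfc hS), ?_⟩
  have htail := (isBigO_setIntegral_compl_smul hf hc hfc hS).comp_tendsto hinv
  refine ((isBigO_refl (fun n : ℕ ↦ n * r n ^ finrank ℝ E) atTop).smul htail).trans_tendsto ?_
  refine (tendsto_rpow_mul_rpow_of_isBigO_log hdim hr hlog zero_le_one (sub_pos.2 hc)).congr' ?_
  filter_upwards [hr] with n hrn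
  rw [Real.rpow_one, smul_eq_mul, Function.comp_apply, Real.inv_rpow hrn.le, ← Real.rpow_neg hrn.le,
    neg_sub]

theorem isBigO_log_of_mul_pow_eq {r : ℕ → ℝ} {k : ℕ} {a b α : ℝ}
    (hr : ∀ᶠ n : ℕ in atTop, r n ^ k = (a * Real.log n + b) / (α * n)) :
    (fun n : ℕ ↦ n * r n ^ k) =O[atTop] fun n : ℕ ↦ Real.log n := by
  have haffine : (fun x ↦ α⁻¹ * (a * Real.log x + b)) =O[atTop] Real.log :=
    (((isBigO_refl _ _).const_mul_left a).add
      Real.isLittleO_const_log_atTop.isBigO).const_mul_left α⁻¹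
  refine (haffine.comp_tendsto tendsto_natCast_atTop_atTop).congr' ?_ .rfl
  filter_upwards [hr, eventually_ne_atTop 0] with n hrn hn
  rw [hrn, Function.comp_apply]
  field_simp

theorem cube_mem_nhds_zero (d : ℕ) : cube d ∈ 𝓝 0 := by
  have hcoord (i : Fin d) : ∀ᶠ x : EuclideanSpace ℝ (Fin d) in 𝓝 0, x i ∈ Ioc (-(1 / 2)) (1 / 2) :=
    (PiLp.continuous_apply 2 _ i).tendsto 0 (Ioc_mem_nhds (by norm_num) (by norm_num))
  exact eventually_all.2 hcoord

end General

/-- Lemma 1: if `g(r) = o(r^{-c})` with `c > d` and `r_n^d = (a log n + b)/(α n)`, then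
`n r_n^d ∫_{ℝ^d \ r_n⁻¹ S} g(|z|) dz → 0`. -/
theorem tail_integral_tendsto_zero
    {d : ℕ} (hd : 2 ≤ d) (g : ℝ → ℝ) (α : ℝ)
    (hg_antitone : AntitoneOn g (Set.Ici 0))
    (hg_mem : ∀ r : ℝ, 0 ≤ r → g r ∈ Set.Icc (0 : ℝ) 1)
    (hg_integrable : Integrable (fun x : EuclideanSpace ℝ (Fin d) => g ‖x‖))
    (hα : α = ∫ x : EuclideanSpace ℝ (Fin d), g ‖x‖) (hα_pos : 0 < α)
    {c : ℝ} (hc : (d : ℝ) < c) (hg : g =o[atTop] fun r : ℝ => r ^ (-c))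
    {a : ℝ} (ha : 0 < a) (b : ℝ) (r : ℕ → ℝ)
    (hr : ∀ᶠ n : ℕ in atTop, 0 < r n ∧ r n ^ d = (a * Real.log n + b) / (α * n)) :
    Tendsto (fun n : ℕ =>
        (n : ℝ) * r n ^ d *
          ∫ z in ((fun x : EuclideanSpace ℝ (Fin d) => (r n)⁻¹ • x) '' cube d)ᶜ, g ‖z‖)
      atTop (nhds 0) := by
  have : NeZero d := ⟨by omega⟩
  have hlog := isBigO_log_of_mul_pow_eq (hr.mono fun _ h ↦ h.2)
  have htail := tail_integral_tendsto_zero_general hg_integrable.1 (by simpa using hc)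
    (hg.isBigO.comp_tendsto tendsto_norm_cobounded_atTop) (cube_mem_nhds_zero d)
    (hr.mono fun _ h ↦ h.1) (by simpa using hlog)
  simpa only [finrank_euclideanSpace_fin, smul_eq_mul, image_smul] using htail.2

end RCM
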